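/- Let J and K be finite index sets, p : J → (0,1), q : K → (0,1), y : J → {0,1}, z : K → {0,1}, let α ∈ (0,1), let β, γ ∈ (0,1) with β + γ = 1, and define δ = (2γ + αβ − αγ − √(α(4βγ + αβ² + αγ² − 2αβγ)))/(2γ). If (1 − ∏_{j∈J} p_j^{y_j})·(1 − ∏_{k∈K} q_k^{z_k}) ≥ α, then: (i) ∑_{j∈J} y_j·ln(p_j) ≤ ln(1−α); (ii) ∑_{k∈K} z_k·ln(q_k) ≤ ln(1−α); and (iii) β·∑_{j∈J} y_j·ln(p_j) + γ·∑_{k∈K} z_k·ln(q_k) ≤ ln((1 − α/(1−δ))^β · δ^γ). -/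

import Mathlib

/-!
Put `P = ∏ p j ^ y j` and `Q = ∏ q k ^ z k`, so that the covering constraint is
`α ≤ (1 - P) * (1 - Q)`. Since `0 < P, Q ≤ 1`, each factor is at least `α`, which gives (i), (ii).

On the curve `(1 - P) * (1 - Q) = α` the sum `β log P + γ log Q` is maximal at the point `(P₀, Q₀)`
where Lagrange's condition `β (1 - P₀) / P₀ = γ (1 - Q₀) / Q₀` holds. With `c` this common value,
the tangent line bound for the logarithm gives
`β log (P / P₀) + γ log (Q / Q₀) ≤ c * (2 - (1 - P) / (1 - P₀) - (1 - Q) / (1 - Q₀))`,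
which is nonpositive by AM-GM, as the two quotients have product at least `1`. On the curve the
condition reads `α β Q₀ = γ (1 - Q₀) (1 - α - Q₀)`, and `δ` is the root in `(0, 1 - α)` of this
quadratic equation.
-/

open Set

section QuadraticLowerRoot

/-- The smaller root of `a * (x * x) + b * x + c` for `0 < a`; it is a root only if the discriminant
is nonnegative, because `√` is `0` on negative numbers. -/
noncomputable def quadraticLowerRoot (a b c : ℝ) : ℝ :=
  (-b - √(discrim a b c)) / (2 * a)

variable {a b c x : ℝ}

theorem quadraticLowerRoot_isRoot (ha : a ≠ 0) (hD : 0 ≤ discrim a b c) :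
    a * (quadraticLowerRoot a b c * quadraticLowerRoot a b c) + b * quadraticLowerRoot a b c + c
      = 0 :=
  (quadratic_eq_zero_iff ha (Real.mul_self_sqrt hD).symm _).2 (Or.inr rfl)

theorem sq_two_mul_add_eq_discrim_add (a b c x : ℝ) :
    (2 * a * x + b) ^ 2 = discrim a b c + 4 * a * (a * (x * x) + b * x + c) := by
  rw [discrim]
  ring

theorem quadraticLowerRoot_lt (ha : 0 < a) (hx : a * (x * x) + b * x + c < 0) :
    quadraticLowerRoot a b c < x := by
  have hsq : (2 * a * x + b) ^ 2 < discrim a b c := by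
    rw [sq_two_mul_add_eq_discrim_add a b c x]
    exact add_lt_of_neg_right _ (mul_neg_of_pos_of_neg (by positivity) hx)
  have hsqrt : -√(discrim a b c) < 2 * a * x + b := Real.neg_sqrt_lt_of_sq_lt hsq
  rw [quadraticLowerRoot, div_lt_iff₀ (by positivity)]
  linarith

theorem lt_quadraticLowerRoot (ha : 0 < a) (hvertex : 2 * a * x + b < 0)
    (hx : 0 < a * (x * x) + b * x + c) : x < quadraticLowerRoot a b c := by
  have hsq : discrim a b c < (-(2 * a * x + b)) ^ 2 := by
    rw [neg_sq, sq_two_mul_add_eq_discrim_add a b c x]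
    exact lt_add_of_pos_right _ (by positivity)
  have hsqrt : √(discrim a b c) < -(2 * a * x + b) := (Real.sqrt_lt' (by linarith)).2 hsq
  rw [quadraticLowerRoot, lt_div_iff₀ (by positivity)]
  linarith

end QuadraticLowerRoot

section TangencyPoint

/-- The `Q`-coordinate of the point where a level line of `β log P + γ log Q` touches the curve
`(1 - P) * (1 - Q) = α`; the `P`-coordinate is then `1 - α / (1 - tangencyPoint α β γ)`. -/
noncomputable def tangencyPoint (α β γ : ℝ) : ℝ :=
  (2 * γ + α * β - α * γ - √(α * (4 * β * γ + α * β ^ 2 + α * γ ^ 2 - 2 * α * β * γ))) / (2 * γ)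

variable {α β γ : ℝ}

theorem tangencyPoint_eq_quadraticLowerRoot (α β γ : ℝ) :
    tangencyPoint α β γ =
      quadraticLowerRoot γ (-(2 * γ + α * β - α * γ)) (γ * (1 - α)) := by
  have hD : discrim γ (-(2 * γ + α * β - α * γ)) (γ * (1 - α)) =
      α * (4 * β * γ + α * β ^ 2 + α * γ ^ 2 - 2 * α * β * γ) := by
    rw [discrim]
    ring
  rw [tangencyPoint, quadraticLowerRoot, hD, neg_neg]

theorem tangencyPoint_mem_Ioo (hα : α ∈ Ioo 0 1) (hβ : 0 < β) (hγ : 0 < γ) :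
    tangencyPoint α β γ ∈ Ioo 0 (1 - α) := by
  obtain ⟨hα₀, hα₁⟩ := hα
  have hα' : 0 < 1 - α := sub_pos.2 hα₁
  rw [tangencyPoint_eq_quadraticLowerRoot]
  constructor
  · apply lt_quadraticLowerRoot hγ
    · linarith [mul_pos hα₀ hβ, mul_pos hγ hα']
    · linarith [mul_pos hγ hα']
  · apply quadraticLowerRoot_lt hγ
    calc γ * ((1 - α) * (1 - α)) + -(2 * γ + α * β - α * γ) * (1 - α) + γ * (1 - α)
        = -(α * β * (1 - α)) := by ring
      _ < 0 := neg_neg_of_pos (by positivity)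

theorem tangencyPoint_stationary (hα : 0 ≤ α) (hβ : 0 ≤ β) (hγ : 0 < γ) :
    α * β * tangencyPoint α β γ =
      γ * (1 - tangencyPoint α β γ) * (1 - α - tangencyPoint α β γ) := by
  have hD : 0 ≤ discrim γ (-(2 * γ + α * β - α * γ)) (γ * (1 - α)) := by
    calc 0 ≤ (α * (β - γ)) ^ 2 + 4 * (α * β * γ) := by positivity
      _ = _ := by rw [discrim]; ring
  have hroot := quadraticLowerRoot_isRoot hγ.ne' hD
  rw [← tangencyPoint_eq_quadraticLowerRoot] at hroot
  linear_combination -hroot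

end TangencyPoint

section LogarithmicBounds

theorem log_le_log_add_div_sub_one {x a : ℝ} (hx : 0 < x) (ha : 0 < a) :
    Real.log x ≤ Real.log a + (x / a - 1) := by
  have h := Real.log_le_sub_one_of_pos (div_pos hx ha)
  rw [Real.log_div hx.ne' ha.ne'] at h
  linarith

theorem two_le_add_of_one_le_mul {a b : ℝ} (ha : 0 ≤ a) (hab : 1 ≤ a * b) : 2 ≤ a + b := by
  have hb : 0 < b := pos_of_mul_pos_right (one_pos.trans_le hab) ha
  nlinarith [sq_nonneg (a - b)]

theorem two_le_div_add_div {x y a b : ℝ} (hx : 0 ≤ x) (ha : 0 < a) (hb : 0 < b)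
    (h : a * b ≤ x * y) : 2 ≤ x / a + y / b := by
  refine two_le_add_of_one_le_mul (div_nonneg hx ha.le) ?_
  rwa [div_mul_div_comm, one_le_div (mul_pos ha hb)]

theorem weighted_log_le_of_stationary {β γ P Q P₀ Q₀ : ℝ} (hβ : 0 ≤ β) (hγ : 0 ≤ γ)
    (hP : P ∈ Ioc 0 1) (hQ : 0 < Q) (hP₀ : P₀ ∈ Ioo 0 1) (hQ₀ : Q₀ ∈ Ioo 0 1)
    (hstat : β * ((1 - P₀) / P₀) = γ * ((1 - Q₀) / Q₀))
    (hcover : (1 - P₀) * (1 - Q₀) ≤ (1 - P) * (1 - Q)) :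
    β * Real.log P + γ * Real.log Q ≤ β * Real.log P₀ + γ * Real.log Q₀ := by
  have hP₀' : 0 < 1 - P₀ := sub_pos.2 hP₀.2
  have hQ₀' : 0 < 1 - Q₀ := sub_pos.2 hQ₀.2
  have hquot : 2 ≤ (1 - P) / (1 - P₀) + (1 - Q) / (1 - Q₀) :=
    two_le_div_add_div (sub_nonneg.2 hP.2) hP₀' hQ₀' hcover
  have hslope {t t₀ : ℝ} (ht₀ : 0 < t₀) (ht₀' : 0 < 1 - t₀) :
      t / t₀ - 1 = (1 - t₀) / t₀ * (1 - (1 - t) / (1 - t₀)) := by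
    field_simp
    ring
  have hc : 0 ≤ β * ((1 - P₀) / P₀) := mul_nonneg hβ (div_pos hP₀' hP₀.1).le
  calc β * Real.log P + γ * Real.log Q
      ≤ β * (Real.log P₀ + (P / P₀ - 1)) + γ * (Real.log Q₀ + (Q / Q₀ - 1)) := by
        gcongr
        · exact log_le_log_add_div_sub_one hP.1 hP₀.1
        · exact log_le_log_add_div_sub_one hQ hQ₀.1
    _ = β * Real.log P₀ + γ * Real.log Q₀ +
          β * ((1 - P₀) / P₀) * (2 - ((1 - P) / (1 - P₀) + (1 - Q) / (1 - Q₀))) := by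
        rw [hslope hP₀.1 hP₀', hslope hQ₀.1 hQ₀']
        linear_combination -(1 - (1 - Q) / (1 - Q₀)) * hstat
    _ ≤ β * Real.log P₀ + γ * Real.log Q₀ :=
        add_le_of_nonpos_right (mul_nonpos_of_nonneg_of_nonpos hc (sub_nonpos.2 hquot))

theorem log_rpow_mul_rpow {a b : ℝ} (ha : 0 < a) (hb : 0 < b) (s t : ℝ) :
    Real.log (a ^ s * b ^ t) = s * Real.log a + t * Real.log b := by
  rw [Real.log_mul (Real.rpow_pos_of_pos ha s).ne' (Real.rpow_pos_of_pos hb t).ne',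
    Real.log_rpow ha, Real.log_rpow hb]

end LogarithmicBounds

section Covering

variable {α β γ P Q : ℝ}

theorem le_one_sub_of_le_mul_one_sub (hP : P ≤ 1) (hQ : 0 ≤ Q)
    (hcover : α ≤ (1 - P) * (1 - Q)) : P ≤ 1 - α := by
  have : (1 - P) * (1 - Q) ≤ 1 - P :=
    mul_le_of_le_one_right (sub_nonneg.2 hP) (sub_le_self 1 hQ)
  linarith

theorem weighted_log_le_tangencyPoint (hα : 0 < α) (hβ : 0 < β) (hγ : 0 < γ)
    (hP : P ∈ Ioc 0 1) (hQ : 0 < Q) (hcover : α ≤ (1 - P) * (1 - Q)) :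
    β * Real.log P + γ * Real.log Q ≤
      Real.log ((1 - α / (1 - tangencyPoint α β γ)) ^ β * tangencyPoint α β γ ^ γ) := by
  have hα₁ : α < 1 :=
    sub_pos.1 (hP.1.trans_le (le_one_sub_of_le_mul_one_sub hP.2 hQ.le hcover))
  have hstat := tangencyPoint_stationary hα.le hβ.le hγ
  obtain ⟨hδ₀, hδα⟩ := tangencyPoint_mem_Ioo ⟨hα, hα₁⟩ hβ hγ
  set δ := tangencyPoint α β γ
  have hδ' : 0 < 1 - δ := by linarith
  have hP₀ : 1 - α / (1 - δ) ∈ Ioo 0 1 :=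
    ⟨sub_pos.2 ((div_lt_one hδ').2 (by linarith)), sub_lt_self 1 (div_pos hα hδ')⟩
  rw [log_rpow_mul_rpow hP₀.1 hδ₀]
  refine weighted_log_le_of_stationary hβ.le hγ.le hP hQ hP₀ ⟨hδ₀, by linarith⟩ ?_ ?_
  · have hδα' : 0 < 1 - δ - α := by linarith
    rw [sub_sub_cancel, one_sub_div hδ'.ne', div_div_div_cancel_right₀ hδ'.ne']
    field_simp
    linear_combination hstat
  · rwa [sub_sub_cancel, div_mul_cancel₀ α hδ'.ne']

end Covering

section FiniteProducts

variable {ι : Type*} {s : Finset ι} {p y : ι → ℝ}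

theorem sum_mul_log_eq_log_prod_rpow (hp : ∀ i ∈ s, 0 < p i) :
    ∑ i ∈ s, y i * Real.log (p i) = Real.log (∏ i ∈ s, p i ^ y i) := by
  rw [Real.log_prod fun i hi => (Real.rpow_pos_of_pos (hp i hi) _).ne']
  exact Finset.sum_congr rfl fun i hi => (Real.log_rpow (hp i hi) _).symm

theorem prod_rpow_mem_Ioc (hp : ∀ i ∈ s, p i ∈ Ioc 0 1) (hy : ∀ i ∈ s, 0 ≤ y i) :
    ∏ i ∈ s, p i ^ y i ∈ Ioc 0 1 :=
  ⟨Finset.prod_pos fun i hi => Real.rpow_pos_of_pos (hp i hi).1 _,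
    Finset.prod_le_one (fun i hi => Real.rpow_nonneg (hp i hi).1.le _)
      fun i hi => Real.rpow_le_one (hp i hi).1.le (hp i hi).2 (hy i hi)⟩

end FiniteProducts

theorem nonlinear_constraint_implies_linear_approx_general
    {J K : Type*} [Fintype J] [Fintype K] {p : J → ℝ} {q : K → ℝ}
    (hp : ∀ j, p j ∈ Ioc 0 1) (hq : ∀ k, q k ∈ Ioc 0 1)
    {y : J → ℝ} {z : K → ℝ} (hy : ∀ j, 0 ≤ y j) (hz : ∀ k, 0 ≤ z k)
    {α β γ δ : ℝ} (hα : 0 < α) (hβ : 0 < β) (hγ : 0 < γ) (hδ : δ = tangencyPoint α β γ)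
    (hcover : α ≤ (1 - ∏ j, p j ^ y j) * (1 - ∏ k, q k ^ z k)) :
    (∑ j, y j * Real.log (p j) ≤ Real.log (1 - α)) ∧
    (∑ k, z k * Real.log (q k) ≤ Real.log (1 - α)) ∧
    (β * ∑ j, y j * Real.log (p j) + γ * ∑ k, z k * Real.log (q k) ≤
      Real.log ((1 - α / (1 - δ)) ^ β * δ ^ γ)) := by
  have hP := prod_rpow_mem_Ioc (fun j (_ : j ∈ Finset.univ) => hp j) fun j _ => hy j
  have hQ := prod_rpow_mem_Ioc (fun k (_ : k ∈ Finset.univ) => hq k) fun k _ => hz k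
  have hPα := le_one_sub_of_le_mul_one_sub hP.2 hQ.1.le hcover
  have hQα := le_one_sub_of_le_mul_one_sub hQ.2 hP.1.le (hcover.trans_eq (mul_comm _ _))
  rw [sum_mul_log_eq_log_prod_rpow fun j _ => (hp j).1,
    sum_mul_log_eq_log_prod_rpow fun k _ => (hq k).1, hδ]
  exact ⟨Real.log_le_log hP.1 hPα, Real.log_le_log hQ.1 hQα,
    weighted_log_le_tangencyPoint hα hβ hγ hP hQ.1 hcover⟩

/-- For finite index sets `J, K`, failure probabilities `p : J → (0,1)`,
`q : K → (0,1)`, binary selections `y : J → {0,1}`, `z : K → {0,1}`, `α ∈ (0,1)`,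
weights `β, γ ∈ (0,1)` with `β + γ = 1`, and the tangency point
`δ = (2γ + αβ − αγ − √(α(4βγ + αβ² + αγ² − 2αβγ))) / (2γ)`:
if `(1 − ∏ j, p j ^ y j) * (1 − ∏ k, q k ^ z k) ≥ α`, then the three linear
approximation constraints (i)–(iii) hold. -/
theorem nonlinear_constraint_implies_linear_approx
    {J K : Type*} [Fintype J] [Fintype K]
    (p : J → ℝ) (q : K → ℝ)
    (hp : ∀ j, p j ∈ Set.Ioo (0 : ℝ) 1) (hq : ∀ k, q k ∈ Set.Ioo (0 : ℝ) 1)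
    (y : J → ℕ) (z : K → ℕ)
    (hy : ∀ j, y j = 0 ∨ y j = 1) (hz : ∀ k, z k = 0 ∨ z k = 1)
    (α β γ : ℝ) (hα : α ∈ Set.Ioo (0 : ℝ) 1)
    (hβ : β ∈ Set.Ioo (0 : ℝ) 1) (hγ : γ ∈ Set.Ioo (0 : ℝ) 1)
    (hβγ : β + γ = 1)
    (δ : ℝ)
    (hδ : δ = (2 * γ + α * β - α * γ -
        Real.sqrt (α * (4 * β * γ + α * β ^ 2 + α * γ ^ 2 - 2 * α * β * γ))) /
      (2 * γ))
    (hcover : (1 - ∏ j, p j ^ y j) * (1 - ∏ k, q k ^ z k) ≥ α) :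
    (∑ j, (y j : ℝ) * Real.log (p j) ≤ Real.log (1 - α)) ∧
    (∑ k, (z k : ℝ) * Real.log (q k) ≤ Real.log (1 - α)) ∧
    (β * ∑ j, (y j : ℝ) * Real.log (p j) + γ * ∑ k, (z k : ℝ) * Real.log (q k) ≤
      Real.log ((1 - α / (1 - δ)) ^ β * δ ^ γ)) := by
  exact nonlinear_constraint_implies_linear_approx_general
    (fun j => Ioo_subset_Ioc_self (hp j)) (fun k => Ioo_subset_Ioc_self (hq k))
    (fun j => (y j).cast_nonneg) (fun k => (z k).cast_nonneg) hα.1 hβ.1 hγ.1 hδ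
    (by simpa only [Real.rpow_natCast] using hcover)
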